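/- Let h₁, …, h_N ∈ K̄[z] be nonzero polynomials, at most one of which has odd degree, and set h := h₁⋯h_N. For each i let h_i = q_i² + ρ_i be a part-square decomposition with t_i := v(ρ_i) − v(h_i) ≥ 0. Put q := q₁⋯q_N, ρ := h − q², and t := v(ρ) − v(h). Then h = q² + ρ is a part-square decomposition of h, and: (a) t ≥ min{t₁, …, t_N}; (b) if there is an index i₀ with t_{i₀} < t_i for all i ≠ i₀, then t = t_{i₀}, and moreover h = q² + ρ is a good decomposition if and only if h_{i₀} = q_{i₀}² + ρ_{i₀} is a good decomposition. -/

import Mathlib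

open Polynomial

/-- The *Gauss valuation* of a polynomial: the minimum of the valuations of its
coefficients (with value `⊤ = +∞` for the zero polynomial). -/
noncomputable def gaussVal {Kbar : Type*} [Field Kbar]
    (v : AddValuation Kbar (WithTop ℚ)) (h : Kbar[X]) : WithTop ℚ :=
  h.support.inf fun i => v (h.coeff i)

/-- `h = q² + ρ` is a *part-square decomposition* of `h`:
`deg q ≤ ⌈deg h / 2⌉`, encoded as `2 * deg q ≤ deg h + 1` (`q = 0` is allowed). -/
def IsPSD {Kbar : Type*} [Field Kbar] (h q ρ : Kbar[X]) : Prop :=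
  h = q ^ 2 + ρ ∧ 2 * q.natDegree ≤ h.natDegree + 1

/-- A part-square decomposition `h = q² + ρ` is *good* if either `v ρ − v h ≥ 2 v 2`,
or `v ρ − v h < 2 v 2` and no part-square decomposition of `h` has strictly larger
Gauss valuation of its remainder. -/
def IsGoodPSD {Kbar : Type*} [Field Kbar] (v : AddValuation Kbar (WithTop ℚ))
    (h q ρ : Kbar[X]) : Prop :=
  IsPSD h q ρ ∧
    (gaussVal v h + (v 2 + v 2) ≤ gaussVal v ρ ∨
      (gaussVal v ρ < gaussVal v h + (v 2 + v 2) ∧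
        ∀ q' ρ' : Kbar[X], IsPSD h q' ρ' → gaussVal v ρ' ≤ gaussVal v ρ))

/-- The residue field of `v` is algebraically closed, encoded via integral lifts:
every monic polynomial of positive degree with integral coefficients has an integral
root modulo the maximal ideal. -/
def ResidueAlgClosed {Kbar : Type*} [Field Kbar]
    (v : AddValuation Kbar (WithTop ℚ)) : Prop :=
  ∀ p : Kbar[X], p.Monic → 0 < p.natDegree → (∀ i, 0 ≤ v (p.coeff i)) →
    ∃ x : Kbar, 0 ≤ v x ∧ 0 < v (p.eval x)

/-!
By Gauss's lemma `v` is a valuation on polynomials. As long as `v ρ < v h + 2 v 2`, the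
decomposition `h = q² + ρ` can be improved exactly when `ρ` is a square up to terms of larger
valuation: in `(q + s)² = q² + s² + 2 q s` the cross term is negligible. Since every constant is a
square, the sum of the even-degree terms of `ρ` is such an approximate square, while the odd-degree
terms are controlled by the derivative because odd integers are units. So `h = q² + ρ` can be
improved if and only if `v ρ < v ρ'`.

This criterion passes to products through `h₁ h₂ - (q₁ q₂)² = ρ₁ h₂ + q₁² ρ₂`: when `ρ₁` strictly
dominates, the second term is negligible, and in `(ρ₁ h₂)' = ρ₁' h₂ + ρ₁ h₂'` so is `ρ₁ h₂'`,
since `h₂` is itself a square up to terms of larger valuation.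
-/

section Ring

variable {R Γ : Type*} [Ring R] [LinearOrderedAddCommMonoidWithTop Γ] (w : AddValuation R Γ)
  {x y : R} {c : Γ}

theorem lt_map_sub (hx : c < w x) (hy : c < w y) : c < w (x - y) :=
  (lt_min hx hy).trans_le (w.map_sub x y)

theorem lt_map_add_iff_left (hy : c < w y) : c < w (x + y) ↔ c < w x :=
  ⟨fun hxy => by simpa only [add_sub_cancel_right] using lt_map_sub w hxy hy,
    fun hx => w.map_lt_add hx hy⟩

theorem map_sq_mono (hxy : w x ≤ w y) : w (x ^ 2) ≤ w (y ^ 2) := by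
  simpa only [w.map_pow] using nsmul_le_nsmul_right hxy 2

theorem map_natCast_nonneg (n : ℕ) : 0 ≤ w n := by
  induction n with
  | zero => simp
  | succ n ih =>
    rw [Nat.cast_succ]
    exact w.map_le_add ih w.map_one.ge

theorem map_two_mul_add_one_eq_zero (h2 : 0 < w 2) (n : ℕ) : w (2 * n + 1) = 0 := by
  have hlt : w 1 < w (2 * n) := by
    rw [w.map_one, w.map_mul]
    exact add_pos_of_pos_of_nonneg h2 (map_natCast_nonneg w n)
  rw [w.map_add_eq_of_lt_right hlt, w.map_one]

end Ring

section CommRing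

variable {R Γ : Type*} [CommRing R] [LinearOrderedAddCommMonoidWithTop Γ] (w : AddValuation R Γ)
  {x y : R} {c : Γ}

theorem le_map_mul_of_le_map_sq (hx : c ≤ w (x ^ 2)) (hy : c ≤ w (y ^ 2)) : c ≤ w (x * y) := by
  simp only [w.map_pow, two_nsmul] at hx hy
  rw [w.map_mul]
  rcases le_total (w x) (w y) with hxy | hyx
  · exact hx.trans (add_le_add_right hxy _)
  · exact hy.trans (add_le_add_left hyx _)

theorem lt_map_mul_of_map_sq (hx : c ≤ w (x ^ 2)) (hy : c < w (y ^ 2)) : c < w (x * y) := by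
  simp only [w.map_pow, two_nsmul] at hx hy
  rw [w.map_mul]
  rcases lt_or_ge (w x) (w y) with hxy | hyx
  · exact hx.trans_lt ((add_lt_add_iff_right_of_ne_top hxy.ne_top).mpr hxy)
  · exact hy.trans_le (add_le_add_left hyx _)

theorem le_map_add_sq (hx : c ≤ w (x ^ 2)) (hy : c ≤ w (y ^ 2)) : c ≤ w ((x + y) ^ 2) :=
  (le_min hx hy).trans <| (w.map_add' x y).elim
    (fun h => (min_le_left _ _).trans (map_sq_mono w h))
    (fun h => (min_le_right _ _).trans (map_sq_mono w h))

theorem le_map_sum_sq {ι : Type*} {s : Finset ι} {f : ι → R} (hf : ∀ i ∈ s, c ≤ w (f i ^ 2)) :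
    c ≤ w ((∑ i ∈ s, f i) ^ 2) :=
  Finset.sum_induction f (fun x => c ≤ w (x ^ 2)) (fun _ _ => le_map_add_sq w) (by simp) hf

theorem le_map_sum_sq_sub_sq_sum {ι : Type*} {s : Finset ι} {f : ι → R}
    (hf : ∀ i ∈ s, c ≤ w (f i ^ 2)) :
    w 2 + c ≤ w (∑ i ∈ s, f i ^ 2 - (∑ i ∈ s, f i) ^ 2) := by
  classical
  induction s using Finset.induction_on with
  | empty => simp
  | insert i s hi ih =>
    rw [Finset.forall_mem_insert] at hf
    have hsplit : ∑ j ∈ insert i s, f j ^ 2 - (∑ j ∈ insert i s, f j) ^ 2 =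
        (∑ j ∈ s, f j ^ 2 - (∑ j ∈ s, f j) ^ 2) - 2 * (f i * ∑ j ∈ s, f j) := by
      rw [Finset.sum_insert hi, Finset.sum_insert hi]
      ring
    rw [hsplit]
    refine w.map_le_sub (ih hf.2) ?_
    rw [w.map_mul]
    exact add_le_add_right (le_map_mul_of_le_map_sq w hf.1 (le_map_sum_sq w hf.2)) _

theorem le_map_sq_of_le_map_mul_add (hxy : c ≤ w (x * (x + y))) (hy : c < w (y ^ 2)) :
    c ≤ w (x ^ 2) := by
  rcases lt_or_ge (w x) (w y) with hlt | hge
  · rwa [w.map_mul, w.map_add_eq_of_lt_left hlt, ← w.map_mul, ← sq] at hxy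
  · exact hy.le.trans (map_sq_mono w hge)

end CommRing

section Remainder

variable {R Γ : Type*} [CommRing R] [LinearOrderedAddCommMonoidWithTop Γ] (w : AddValuation R Γ)
  {h q h₁ q₁ h₂ q₂ : R} {c : Γ}

theorem mul_sub_mul_sq (h₁ q₁ h₂ q₂ : R) :
    h₁ * h₂ - (q₁ * q₂) ^ 2 = (h₁ - q₁ ^ 2) * h₂ + q₁ ^ 2 * (h₂ - q₂ ^ 2) := by
  ring

theorem map_le_map_sq_of_le_map_sub (hq : w h ≤ w (h - q ^ 2)) : w h ≤ w (q ^ 2) := by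
  simpa only [sub_sub_cancel] using w.map_le_sub le_rfl hq

theorem le_map_mul_sub_mul_sq (hc : 0 ≤ c) (h₁q₁ : c + w h₁ ≤ w (h₁ - q₁ ^ 2))
    (h₂q₂ : c + w h₂ ≤ w (h₂ - q₂ ^ 2)) :
    c + w (h₁ * h₂) ≤ w (h₁ * h₂ - (q₁ * q₂) ^ 2) := by
  have hq₁ : w h₁ ≤ w (q₁ ^ 2) :=
    map_le_map_sq_of_le_map_sub w ((le_add_of_nonneg_left hc).trans h₁q₁)
  rw [mul_sub_mul_sq, w.map_mul]
  apply w.map_le_add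
  · rw [w.map_mul, ← add_assoc]
    exact add_le_add_left h₁q₁ _
  · rw [w.map_mul, add_left_comm]
    exact add_le_add hq₁ h₂q₂

theorem lt_map_mul_sub_mul_sq (hc : 0 ≤ c) (h₁_ne : w h₁ ≠ ⊤) (h₂_ne : w h₂ ≠ ⊤)
    (h₁q₁ : c + w h₁ < w (h₁ - q₁ ^ 2)) (h₂q₂ : c + w h₂ < w (h₂ - q₂ ^ 2)) :
    c + w (h₁ * h₂) < w (h₁ * h₂ - (q₁ * q₂) ^ 2) := by
  have hq₁ : w h₁ ≤ w (q₁ ^ 2) :=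
    map_le_map_sq_of_le_map_sub w ((le_add_of_nonneg_left hc).trans h₁q₁.le)
  rw [mul_sub_mul_sq, w.map_mul]
  apply w.map_lt_add
  · rw [w.map_mul, ← add_assoc]
    exact (add_lt_add_iff_left_of_ne_top h₂_ne).mpr h₁q₁
  · rw [w.map_mul, add_left_comm]
    exact ((add_lt_add_iff_right_of_ne_top h₁_ne).mpr h₂q₂).trans_le (add_le_add_left hq₁ _)

end Remainder

section RemainderProd

variable {R Γ ι : Type*} [CommRing R] [LinearOrderedAddCommGroupWithTop Γ] (w : AddValuation R Γ)
  {s : Finset ι} {hs qs : ι → R} {c : Γ}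

theorem le_map_prod_sub_prod_sq (hc : 0 ≤ c)
    (hb : ∀ i ∈ s, c + w (hs i) ≤ w (hs i - qs i ^ 2)) :
    c + w (∏ i ∈ s, hs i) ≤ w (∏ i ∈ s, hs i - (∏ i ∈ s, qs i) ^ 2) := by
  simpa only [Prod.fst_prod, Prod.snd_prod] using
    Finset.prod_induction (fun i => (hs i, qs i))
      (fun p : R × R => c + w p.1 ≤ w (p.1 - p.2 ^ 2))
      (fun _ _ => le_map_mul_sub_mul_sq w hc) (by simp) hb

theorem lt_map_prod_sub_prod_sq (hc : 0 ≤ c) (hc_ne : c ≠ ⊤) (hne : ∀ i ∈ s, w (hs i) ≠ ⊤)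
    (hb : ∀ i ∈ s, c + w (hs i) < w (hs i - qs i ^ 2)) :
    c + w (∏ i ∈ s, hs i) < w (∏ i ∈ s, hs i - (∏ i ∈ s, qs i) ^ 2) := by
  have hprod := Finset.prod_induction (fun i => (hs i, qs i))
    (fun p : R × R => w p.1 ≠ ⊤ ∧ c + w p.1 < w (p.1 - p.2 ^ 2))
    (fun p p' hp hp' => ⟨by
      rw [Prod.fst_mul, w.map_mul]
      exact LinearOrderedAddCommGroupWithTop.add_ne_top.mpr ⟨hp.1, hp'.1⟩,
      lt_map_mul_sub_mul_sq w hc hp.1 hp'.1 hp.2 hp'.2⟩)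
    (by simpa using hc_ne.lt_top) fun i hi => ⟨hne i hi, hb i hi⟩
  simpa only [Prod.fst_prod, Prod.snd_prod] using hprod.2

end RemainderProd

section GaussValuation

variable {F : Type*} [Field F] (v : AddValuation F (WithTop ℚ)) {f g : F[X]} {c : WithTop ℚ}

theorem le_gaussVal_iff : c ≤ gaussVal v f ↔ ∀ n, c ≤ v (f.coeff n) := by
  refine Finset.le_inf_iff.trans ⟨fun h n => ?_, fun h n _ => h n⟩
  by_cases hn : n ∈ f.support
  · exact h n hn
  · simp [notMem_support_iff.mp hn]

theorem gaussVal_le_coeff (f : F[X]) (n : ℕ) : gaussVal v f ≤ v (f.coeff n) :=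
  (le_gaussVal_iff v).mp le_rfl n

theorem lt_gaussVal_iff (hc : c ≠ ⊤) : c < gaussVal v f ↔ ∀ n, c < v (f.coeff n) := by
  refine ⟨fun h n => h.trans_le (gaussVal_le_coeff v f n), fun h => ?_⟩
  exact (Finset.lt_inf_iff hc.lt_top).mpr fun n _ => h n

theorem gaussVal_monomial (n : ℕ) (a : F) : gaussVal v (monomial n a) = v a := by
  apply le_antisymm
  · simpa using gaussVal_le_coeff v (monomial n a) n
  · rw [le_gaussVal_iff]
    intro m
    rw [coeff_monomial]
    split_ifs <;> simp

theorem gaussVal_C (a : F) : gaussVal v (C a) = v a :=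
  gaussVal_monomial v 0 a

theorem min_gaussVal_le_add (f g : F[X]) :
    min (gaussVal v f) (gaussVal v g) ≤ gaussVal v (f + g) := by
  rw [le_gaussVal_iff]
  intro n
  rw [coeff_add]
  exact (min_le_min (gaussVal_le_coeff v f n) (gaussVal_le_coeff v g n)).trans (v.map_add _ _)

theorem gaussVal_ne_top (hf : f ≠ 0) : gaussVal v f ≠ ⊤ := fun h =>
  hf <| leadingCoeff_eq_zero.mp <| (v.top_iff).mp <|
    top_le_iff.mp (h.ge.trans (gaussVal_le_coeff v f _))

theorem exists_min_coeff_eq_gaussVal (hf : f ≠ 0) :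
    ∃ n, v (f.coeff n) = gaussVal v f ∧ ∀ m < n, gaussVal v f < v (f.coeff m) := by
  classical
  have hex : ∃ n, v (f.coeff n) = gaussVal v f := by
    obtain ⟨n, _, hn⟩ := Finset.exists_mem_eq_inf f.support (support_nonempty.mpr hf)
      fun i => v (f.coeff i)
    exact ⟨n, hn.symm⟩
  exact ⟨Nat.find hex, Nat.find_spec hex, fun m hm =>
    (gaussVal_le_coeff v f m).lt_of_ne' (Nat.find_min hex hm)⟩

theorem gaussVal_add_le_mul (f g : F[X]) :
    gaussVal v f + gaussVal v g ≤ gaussVal v (f * g) := by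
  rw [le_gaussVal_iff]
  intro n
  rw [coeff_mul]
  refine v.map_le_sum fun p _ => ?_
  rw [v.map_mul]
  exact add_le_add (gaussVal_le_coeff v f p.1) (gaussVal_le_coeff v g p.2)

-- Gauss's lemma: at the sum `i + j` of the first indices where the minima are attained, the
-- term `fᵢ gⱼ` is the unique one of least valuation.
theorem exists_coeff_mul_eq (hf : f ≠ 0) (hg : g ≠ 0) :
    ∃ n, v ((f * g).coeff n) = gaussVal v f + gaussVal v g := by
  classical
  obtain ⟨i, hi, hi_min⟩ := exists_min_coeff_eq_gaussVal v hf
  obtain ⟨j, hj, hj_min⟩ := exists_min_coeff_eq_gaussVal v hg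
  have hterm : v (f.coeff i * g.coeff j) = gaussVal v f + gaussVal v g := by
    rw [v.map_mul, hi, hj]
  have hrest : gaussVal v f + gaussVal v g <
      v (∑ p ∈ (Finset.HasAntidiagonal.antidiagonal (i + j)).erase (i, j),
        f.coeff p.1 * g.coeff p.2) := by
    refine v.map_lt_sum (WithTop.add_ne_top.mpr ⟨gaussVal_ne_top v hf, gaussVal_ne_top v hg⟩) ?_
    rintro ⟨a, b⟩ hab
    simp only [Finset.mem_erase, ne_eq, Prod.mk.injEq,
      Finset.HasAntidiagonal.mem_antidiagonal] at hab
    rw [v.map_mul]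
    rcases lt_or_ge a i with ha | ha
    · exact WithTop.add_lt_add_of_lt_of_le (gaussVal_ne_top v hg) (hi_min a ha)
        (gaussVal_le_coeff v g b)
    · exact WithTop.add_lt_add_of_le_of_lt (gaussVal_ne_top v hf) (gaussVal_le_coeff v f a)
        (hj_min b (by lia))
  refine ⟨i + j, ?_⟩
  have hmem : (i, j) ∈ Finset.HasAntidiagonal.antidiagonal (i + j) :=
    Finset.HasAntidiagonal.mem_antidiagonal.mpr rfl
  rw [coeff_mul, ← Finset.add_sum_erase _ _ hmem, v.map_add_eq_of_lt_left (hterm ▸ hrest), hterm]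

theorem gaussVal_mul (f g : F[X]) : gaussVal v (f * g) = gaussVal v f + gaussVal v g := by
  rcases eq_or_ne f 0 with rfl | hf
  · simp [gaussVal]
  rcases eq_or_ne g 0 with rfl | hg
  · simp [gaussVal]
  obtain ⟨n, hn⟩ := exists_coeff_mul_eq v hf hg
  exact le_antisymm (hn ▸ gaussVal_le_coeff v _ n) (gaussVal_add_le_mul v f g)

/-- The Gauss valuation `gaussVal v`, bundled as an additive valuation on `F[X]`. -/
noncomputable def gaussValuation : AddValuation F[X] (WithTop ℚ) :=
  AddValuation.of (gaussVal v) (by simp [gaussVal]) (by rw [← C_1, gaussVal_C, v.map_one])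
    (min_gaussVal_le_add v) (gaussVal_mul v)

theorem gaussValuation_apply (f : F[X]) : gaussValuation v f = gaussVal v f :=
  rfl

theorem gaussValuation_two : gaussValuation v 2 = v 2 :=
  gaussVal_C v 2

end GaussValuation

section Derivative

variable {F : Type*} [Field F] (v : AddValuation F (WithTop ℚ)) {f g y : F[X]} {c : WithTop ℚ}

theorem gaussValuation_le_derivative (f : F[X]) :
    gaussValuation v f ≤ gaussValuation v (derivative f) := by
  refine (le_gaussVal_iff v).mpr fun n => ?_
  rw [coeff_derivative, v.map_mul, ← Nat.cast_succ]
  exact (gaussVal_le_coeff v f (n + 1)).trans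
    (le_add_of_nonneg_right (map_natCast_nonneg v _))

theorem lt_gaussValuation_derivative_sq_add (h2 : 0 < v 2) (hg : c ≤ gaussValuation v (g ^ 2))
    (hy : c < gaussValuation v y) : c < gaussValuation v (derivative (g ^ 2 + y)) := by
  have hsq : c < gaussValuation v (derivative (g ^ 2)) := by
    have hcg : c < v 2 + c := by
      simpa using (add_lt_add_iff_left_of_ne_top hy.ne_top).mpr h2
    have hle : c ≤ gaussValuation v (g * derivative g) := by
      rw [sq, (gaussValuation v).map_mul] at hg
      rw [(gaussValuation v).map_mul]
      exact hg.trans (add_le_add_right (gaussValuation_le_derivative v g) _)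
    rw [derivative_sq, C_ofNat, mul_assoc, (gaussValuation v).map_mul, gaussValuation_two]
    exact hcg.trans_le (add_le_add_right hle _)
  rw [derivative_add]
  exact (gaussValuation v).map_lt_add hsq (hy.trans_le (gaussValuation_le_derivative v y))

theorem lt_coeff_two_mul_add_one (h2 : 0 < v 2) (hf : c < gaussValuation v (derivative f)) (n : ℕ) :
    c < v (f.coeff (2 * n + 1)) := by
  have hn := hf.trans_le (gaussVal_le_coeff v (derivative f) (2 * n))
  rw [coeff_derivative, v.map_mul] at hn
  push_cast at hn
  rwa [map_two_mul_add_one_eq_zero v h2, add_zero] at hn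

theorem lt_gaussValuation_sub_expand_contract (h2 : 0 < v 2)
    (hf : c < gaussValuation v (derivative f)) :
    c < gaussValuation v (f - expand F 2 (contract 2 f)) := by
  refine (lt_gaussVal_iff v hf.ne_top).mpr fun n => ?_
  rw [coeff_sub, coeff_expand two_pos]
  split_ifs with hn
  · rw [coeff_contract two_ne_zero, Nat.div_mul_cancel hn, sub_self, v.map_zero]
    exact hf.ne_top.lt_top
  · obtain ⟨k, rfl⟩ := Nat.not_even_iff_odd.mp (mt even_iff_two_dvd.mp hn)
    rw [sub_zero]
    exact lt_coeff_two_mul_add_one v h2 hf k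

theorem gaussValuation_le_contract {p : ℕ} (hp : p ≠ 0) (f : F[X]) :
    gaussValuation v f ≤ gaussValuation v (contract p f) :=
  (le_gaussVal_iff v).mpr fun n => by
    rw [coeff_contract hp]
    exact gaussVal_le_coeff v f _

theorem natDegree_contract_mul_le {R : Type*} [CommSemiring R] {p : ℕ} (hp : p ≠ 0) (f : R[X]) :
    p * (contract p f).natDegree ≤ f.natDegree := by
  rw [mul_comm, ← Nat.le_div_iff_mul_le (Nat.pos_of_ne_zero hp), natDegree_le_iff_coeff_eq_zero]
  intro n hn
  rw [coeff_contract hp]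
  exact coeff_eq_zero_of_natDegree_lt ((Nat.div_lt_iff_lt_mul (Nat.pos_of_ne_zero hp)).mp hn)

theorem exists_sq_approx_expand (hsq : ∀ a : F, IsSquare a) (g : F[X]) :
    ∃ s : F[X], s.natDegree ≤ g.natDegree ∧ gaussValuation v g ≤ gaussValuation v (s ^ 2) ∧
      v 2 + gaussValuation v g ≤ gaussValuation v (expand F 2 g - s ^ 2) := by
  choose r hr using fun a => (hsq a).exists_sq
  let m : ℕ → F[X] := fun n => monomial n (r (g.coeff n))
  have hm_sq (n : ℕ) : m n ^ 2 = monomial (n * 2) (g.coeff n) := by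
    simp only [m, monomial_pow, ← hr]
  have hm_le (n : ℕ) : gaussValuation v g ≤ gaussValuation v (m n ^ 2) := by
    rw [hm_sq]
    exact (gaussVal_le_coeff v g n).trans (gaussVal_monomial v _ _).ge
  have hexpand : expand F 2 g = ∑ n ∈ g.support, m n ^ 2 := by
    conv_lhs => rw [g.as_sum_support]
    simp only [map_sum, expand_monomial, hm_sq]
  refine ⟨∑ n ∈ g.support, m n, ?_, le_map_sum_sq _ fun n _ => hm_le n, ?_⟩
  · exact natDegree_sum_le_of_forall_le _ _ fun n hn =>
      (natDegree_monomial_le _).trans (le_natDegree_of_mem_supp n hn)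
  · rw [hexpand, ← gaussValuation_two]
    exact le_map_sum_sq_sub_sq_sum _ fun n _ => hm_le n

theorem exists_sq_approx (hsq : ∀ a : F, IsSquare a) (h2 : 0 < v 2)
    (hf : gaussValuation v f < gaussValuation v (derivative f)) :
    ∃ s : F[X], 2 * s.natDegree ≤ f.natDegree ∧ gaussValuation v f ≤ gaussValuation v (s ^ 2) ∧
      gaussValuation v f < gaussValuation v (f - s ^ 2) := by
  obtain ⟨s, hs_deg, hs_le, hs_approx⟩ := exists_sq_approx_expand v hsq (contract 2 f)
  have hf_le := gaussValuation_le_contract v two_ne_zero f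
  have hf_lt : gaussValuation v f < v 2 + gaussValuation v f := by
    simpa using (add_lt_add_iff_left_of_ne_top hf.ne_top).mpr h2
  refine ⟨s, ?_, hf_le.trans hs_le, ?_⟩
  · exact (Nat.mul_le_mul_left 2 hs_deg).trans (natDegree_contract_mul_le two_ne_zero f)
  · rw [← sub_add_sub_cancel f (expand F 2 (contract 2 f))]
    exact (gaussValuation v).map_lt_add (lt_gaussValuation_sub_expand_contract v h2 hf)
      (hf_lt.trans_le ((add_le_add_right hf_le _).trans hs_approx))

end Derivative

section PartSquare

variable {F : Type*} [Field F] (v : AddValuation F (WithTop ℚ)) {h q ρ : F[X]}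

theorem IsPSD.eq_sub (hd : IsPSD h q ρ) : ρ = h - q ^ 2 :=
  eq_sub_of_add_eq' hd.1.symm

theorem IsPSD.natDegree_remainder_le (hd : IsPSD h q ρ) : ρ.natDegree ≤ h.natDegree + 1 := by
  rw [hd.eq_sub]
  exact (natDegree_sub_le _ _).trans (max_le (Nat.le_succ _) (natDegree_pow_le.trans hd.2))

theorem IsPSD.gaussVal_le_sq (hd : IsPSD h q ρ) (hρ : gaussVal v h ≤ gaussVal v ρ) :
    gaussVal v h ≤ gaussVal v (q ^ 2) :=
  map_le_map_sq_of_le_map_sub (gaussValuation v) (hd.eq_sub ▸ hρ)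

theorem exists_better_iff_lt_derivative (hsq : ∀ a : F, IsSquare a) (h2 : 0 < v 2)
    (hd : IsPSD h q ρ) (hq : gaussVal v ρ < gaussVal v ((2 * q) ^ 2)) :
    (∃ q' ρ', IsPSD h q' ρ' ∧ gaussVal v ρ < gaussVal v ρ') ↔
      gaussVal v ρ < gaussVal v (derivative ρ) := by
  simp only [← gaussValuation_apply] at hq ⊢
  constructor
  · rintro ⟨q', ρ', hd', hlt⟩
    have hdiff : (q' - q) * ((q' - q) + 2 * q) = ρ - ρ' := by
      rw [hd.eq_sub, hd'.eq_sub]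
      ring
    have hsq_le : gaussValuation v ρ ≤ gaussValuation v ((q' - q) ^ 2) :=
      le_map_sq_of_le_map_mul_add _ (hdiff ▸ (gaussValuation v).map_le_sub le_rfl hlt.le) hq
    have hρ : ρ = (q' - q) ^ 2 + (ρ' + (q' - q) * (2 * q)) := by
      linear_combination -hdiff
    have hder := lt_gaussValuation_derivative_sq_add v h2 hsq_le
      ((gaussValuation v).map_lt_add hlt (lt_map_mul_of_map_sq _ hsq_le hq))
    rwa [← hρ] at hder
  · intro hder
    obtain ⟨s, hs_deg, hs_le, hs_lt⟩ := exists_sq_approx v hsq h2 hder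
    refine ⟨q + s, ρ - s ^ 2 - s * (2 * q), ⟨?_, ?_⟩, ?_⟩
    · rw [hd.1]
      ring
    · have hρ_deg := hd.natDegree_remainder_le
      have hq_deg := hd.2
      have hadd := natDegree_add_le q s
      lia
    · exact lt_map_sub _ hs_lt (lt_map_mul_of_map_sq _ hs_le hq)

theorem two_pos_of_lt (hρ : gaussVal v h ≤ gaussVal v ρ)
    (hlt : gaussVal v ρ < gaussVal v h + (v 2 + v 2)) : 0 < v 2 :=
  lt_of_not_ge fun h2 =>
    (hρ.trans_lt hlt).not_ge (add_le_of_nonpos_right (add_nonpos h2 h2))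

theorem isGoodPSD_iff (hsq : ∀ a : F, IsSquare a) (hd : IsPSD h q ρ)
    (hρ : gaussVal v h ≤ gaussVal v ρ) :
    IsGoodPSD v h q ρ ↔ gaussVal v h + (v 2 + v 2) ≤ gaussVal v ρ ∨
      gaussVal v (derivative ρ) ≤ gaussVal v ρ := by
  rcases le_or_gt (gaussVal v h + (v 2 + v 2)) (gaussVal v ρ) with hle | hlt
  · exact iff_of_true ⟨hd, .inl hle⟩ (.inl hle)
  have hq : gaussVal v ρ < gaussVal v ((2 * q) ^ 2) := by
    have h4q : gaussVal v ((2 * q) ^ 2) = gaussVal v (q ^ 2) + (v 2 + v 2) := by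
      rw [mul_pow, gaussVal_mul, sq 2, gaussVal_mul, ← gaussValuation_apply v 2,
        gaussValuation_two, add_comm]
    rw [h4q]
    exact hlt.trans_le (add_le_add_left (hd.gaussVal_le_sq v hρ) _)
  have hbetter := not_congr
    (exists_better_iff_lt_derivative v hsq (two_pos_of_lt v hρ hlt) hd hq)
  push Not at hbetter
  simp only [IsGoodPSD, hd, hlt, hlt.not_ge, hbetter, true_and, false_or]

end PartSquare

section Product

theorem two_mul_sum_le_sum_add_one {ι : Type*} {s : Finset ι} {a b : ι → ℕ}
    (hab : ∀ i ∈ s, 2 * a i ≤ b i + 1)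
    (hodd : ∀ i ∈ s, ∀ j ∈ s, Odd (b i) → Odd (b j) → i = j) :
    2 * ∑ i ∈ s, a i ≤ ∑ i ∈ s, b i + 1 := by
  have hcard : Finset.card {i ∈ s | Odd (b i)} ≤ 1 := by
    refine Finset.card_le_one.mpr fun i hi j hj => ?_
    rw [Finset.mem_filter] at hi hj
    exact hodd i hi.1 j hj.1 hi.2 hj.2
  calc 2 * ∑ i ∈ s, a i ≤ ∑ i ∈ s, (b i + if Odd (b i) then 1 else 0) := by
        rw [Finset.mul_sum]
        refine Finset.sum_le_sum fun i hi => ?_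
        have hi' := hab i hi
        split_ifs with hbi
        · exact hi'
        · obtain ⟨m, hm⟩ := Nat.not_odd_iff_even.mp hbi
          lia
    _ = ∑ i ∈ s, b i + Finset.card {i ∈ s | Odd (b i)} := by
        rw [Finset.sum_add_distrib, Finset.card_filter]
    _ ≤ ∑ i ∈ s, b i + 1 := Nat.add_le_add_left hcard _

variable {F ι : Type*} [Field F] (v : AddValuation F (WithTop ℚ)) {h q ρ h' q' : F[X]}
  {s : Finset ι} {hs qs ρs : ι → F[X]}

theorem IsPSD.prod (hne : ∀ i ∈ s, hs i ≠ 0)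
    (hodd : ∀ i ∈ s, ∀ j ∈ s, Odd (hs i).natDegree → Odd (hs j).natDegree → i = j)
    (hdec : ∀ i ∈ s, IsPSD (hs i) (qs i) (ρs i)) :
    IsPSD (∏ i ∈ s, hs i) (∏ i ∈ s, qs i) (∏ i ∈ s, hs i - (∏ i ∈ s, qs i) ^ 2) := by
  refine ⟨(add_sub_cancel _ _).symm, ?_⟩
  rw [natDegree_prod s hs hne]
  exact (Nat.mul_le_mul_left 2 (natDegree_prod_le s qs)).trans
    (two_mul_sum_le_sum_add_one (fun i hi => (hdec i hi).2) hodd)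

theorem lt_gaussVal_sq_mul_sub (hd : IsPSD h q ρ) (hρ : gaussVal v h ≤ gaussVal v ρ)
    (hlt : gaussVal v ρ + gaussVal v h' < gaussVal v (h' - q' ^ 2) + gaussVal v h) :
    gaussVal v ρ + gaussVal v h' < gaussVal v (q ^ 2 * (h' - q' ^ 2)) := by
  rw [gaussVal_mul, add_comm (gaussVal v (q ^ 2))]
  exact hlt.trans_le (add_le_add_right (hd.gaussVal_le_sq v hρ) _)

theorem gaussVal_mul_sub_mul_sq (hd : IsPSD h q ρ) (hρ : gaussVal v h ≤ gaussVal v ρ)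
    (hlt : gaussVal v ρ + gaussVal v h' < gaussVal v (h' - q' ^ 2) + gaussVal v h) :
    gaussVal v (h * h' - (q * q') ^ 2) = gaussVal v ρ + gaussVal v h' := by
  have hE := lt_gaussVal_sq_mul_sub v hd hρ hlt
  rw [← gaussVal_mul] at hE ⊢
  rw [mul_sub_mul_sq, ← hd.eq_sub]
  exact (gaussValuation v).map_add_eq_of_lt_left hE

theorem lt_derivative_mul_sub_mul_sq_iff (h2 : 0 < v 2) (hh' : h' ≠ 0) (hd : IsPSD h q ρ)
    (hρ : gaussVal v h ≤ gaussVal v ρ)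
    (hlt : gaussVal v ρ + gaussVal v h' < gaussVal v (h' - q' ^ 2) + gaussVal v h) :
    gaussVal v (h * h' - (q * q') ^ 2) <
        gaussVal v (derivative (h * h' - (q * q') ^ 2)) ↔
      gaussVal v ρ < gaussVal v (derivative ρ) := by
  have hρ_ne : gaussVal v ρ ≠ ⊤ := (WithTop.add_ne_top.mp hlt.ne_top).1
  have hρ' : gaussVal v h' < gaussVal v (h' - q' ^ 2) := by
    refine (add_lt_add_iff_right_of_ne_top hρ_ne).mp (hlt.trans_le ?_)
    rw [add_comm]
    exact add_le_add_left hρ _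
  have hh'_der : gaussVal v h' < gaussVal v (derivative h') := by
    simpa only [add_sub_cancel, gaussValuation_apply] using lt_gaussValuation_derivative_sq_add v h2
      (map_le_map_sq_of_le_map_sub (gaussValuation v) hρ'.le) hρ'
  have hsmall : gaussVal v ρ + gaussVal v h' <
      gaussVal v (ρ * derivative h' + derivative (q ^ 2 * (h' - q' ^ 2))) := by
    refine (gaussValuation v).map_lt_add ?_ ((lt_gaussVal_sq_mul_sub v hd hρ hlt).trans_le
      (gaussValuation_le_derivative v _))
    rw [gaussValuation_apply, gaussVal_mul]
    exact (add_lt_add_iff_right_of_ne_top hρ_ne).mpr hh'_der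
  rw [gaussVal_mul_sub_mul_sq v hd hρ hlt, mul_sub_mul_sq, ← hd.eq_sub, derivative_add,
    derivative_mul, add_assoc]
  refine (lt_map_add_iff_left (gaussValuation v) hsmall).trans ?_
  rw [gaussValuation_apply, gaussVal_mul, add_lt_add_iff_left_of_ne_top (gaussVal_ne_top v hh')]

theorem isGoodPSD_mul_iff (hsq : ∀ a : F, IsSquare a) (hh' : h' ≠ 0) (hd : IsPSD h q ρ)
    (hρ : gaussVal v h ≤ gaussVal v ρ)
    (hd_mul : IsPSD (h * h') (q * q') (h * h' - (q * q') ^ 2))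
    (hlt : gaussVal v ρ + gaussVal v h' < gaussVal v (h' - q' ^ 2) + gaussVal v h) :
    IsGoodPSD v (h * h') (q * q') (h * h' - (q * q') ^ 2) ↔ IsGoodPSD v h q ρ := by
  have hval := gaussVal_mul_sub_mul_sq v hd hρ hlt
  have hρ_mul : gaussVal v (h * h') ≤ gaussVal v (h * h' - (q * q') ^ 2) := by
    rw [hval, gaussVal_mul]
    exact add_le_add_left hρ _
  have hbound : gaussVal v (h * h') + (v 2 + v 2) ≤ gaussVal v (h * h' - (q * q') ^ 2) ↔
      gaussVal v h + (v 2 + v 2) ≤ gaussVal v ρ := by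
    rw [hval, gaussVal_mul, add_right_comm,
      add_le_add_iff_left_of_ne_top (gaussVal_ne_top v hh')]
  rw [isGoodPSD_iff v hsq hd_mul hρ_mul, isGoodPSD_iff v hsq hd hρ, hbound]
  refine or_congr_right' fun hsmall => ?_
  have h2 := two_pos_of_lt v hρ (not_le.mp hsmall)
  simpa only [not_lt] using not_congr (lt_derivative_mul_sub_mul_sq_iff v h2 hh' hd hρ hlt)

theorem exists_gaussVal_eq_add_and_nonneg (hh : h ≠ 0) (hρ : gaussVal v h ≤ gaussVal v ρ) :
    ∃ t, 0 ≤ t ∧ gaussVal v ρ = t + gaussVal v h := by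
  have hh_ne := gaussVal_ne_top v hh
  refine ⟨gaussVal v ρ - gaussVal v h, ?_, ?_⟩
  · rwa [← LinearOrderedAddCommGroupWithTop.sub_self_eq_zero_of_ne_top hh_ne,
      LinearOrderedAddCommGroupWithTop.sub_le_sub_iff_left_of_ne_top hh_ne]
  · rw [sub_eq_add_neg, LinearOrderedAddCommGroupWithTop.neg_add_cancel_right_of_ne_top hh_ne]

theorem exists_gaussVal_add_le_prod (hs_nonempty : s.Nonempty) (hne : ∀ i ∈ s, hs i ≠ 0)
    (hdec : ∀ i ∈ s, IsPSD (hs i) (qs i) (ρs i))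
    (htnn : ∀ i ∈ s, gaussVal v (hs i) ≤ gaussVal v (ρs i)) :
    ∃ i ∈ s, gaussVal v (ρs i) + gaussVal v (∏ i ∈ s, hs i) ≤
      gaussVal v (∏ i ∈ s, hs i - (∏ i ∈ s, qs i) ^ 2) + gaussVal v (hs i) := by
  choose! t ht_nonneg ht using fun i hi =>
    exists_gaussVal_eq_add_and_nonneg v (hne i hi) (htnn i hi)
  obtain ⟨i, hi, hmin⟩ := s.exists_min_image t hs_nonempty
  have hprod := le_map_prod_sub_prod_sq (gaussValuation v) (ht_nonneg i hi)
    (hs := hs) (qs := qs) fun j hj => by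
      rw [← (hdec j hj).eq_sub]
      exact (add_le_add_left (hmin j hj) _).trans (ht j hj).ge
  refine ⟨i, hi, ?_⟩
  rw [ht i hi, add_right_comm]
  exact add_le_add_left hprod _

theorem gaussVal_add_lt_prod (hh : h ≠ 0) (hρ : gaussVal v h ≤ gaussVal v ρ)
    (hρ_ne : gaussVal v ρ ≠ ⊤) (hne : ∀ i ∈ s, hs i ≠ 0)
    (hdec : ∀ i ∈ s, IsPSD (hs i) (qs i) (ρs i))
    (hlt : ∀ i ∈ s, gaussVal v ρ + gaussVal v (hs i) < gaussVal v (ρs i) + gaussVal v h) :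
    gaussVal v ρ + gaussVal v (∏ i ∈ s, hs i) <
      gaussVal v (∏ i ∈ s, hs i - (∏ i ∈ s, qs i) ^ 2) + gaussVal v h := by
  obtain ⟨t, ht_nonneg, ht⟩ := exists_gaussVal_eq_add_and_nonneg v hh hρ
  have hh_ne := gaussVal_ne_top v hh
  rw [ht] at hρ_ne
  rw [ht, add_right_comm, add_lt_add_iff_left_of_ne_top hh_ne]
  refine lt_map_prod_sub_prod_sq (gaussValuation v) ht_nonneg (WithTop.add_ne_top.mp hρ_ne).1
    (fun i hi => gaussVal_ne_top v (hne i hi)) fun i hi => ?_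
  have hi_lt := hlt i hi
  rw [ht, add_right_comm, add_lt_add_iff_left_of_ne_top hh_ne] at hi_lt
  exact (hdec i hi).eq_sub ▸ hi_lt

end Product

theorem stmt4_general {F ι : Type*} [Field F] (hsq : ∀ a : F, IsSquare a)
    (v : AddValuation F (WithTop ℚ)) [Fintype ι] [Nonempty ι] (hs qs ρs : ι → F[X])
    (hne : ∀ i, hs i ≠ 0)
    (hoddone : ∀ i j, Odd (hs i).natDegree → Odd (hs j).natDegree → i = j)
    (hdec : ∀ i, IsPSD (hs i) (qs i) (ρs i))
    (htnn : ∀ i, gaussVal v (hs i) ≤ gaussVal v (ρs i)) :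
    ∀ h q ρ : F[X], h = ∏ i, hs i → q = ∏ i, qs i → ρ = h - q ^ 2 →
      IsPSD h q ρ ∧
      (∃ i, gaussVal v (ρs i) + gaussVal v h ≤ gaussVal v ρ + gaussVal v (hs i)) ∧
      ∀ i₀ : ι,
        (∀ i, i ≠ i₀ →
          gaussVal v (ρs i₀) + gaussVal v (hs i) <
            gaussVal v (ρs i) + gaussVal v (hs i₀)) →
        gaussVal v ρ + gaussVal v (hs i₀) = gaussVal v (ρs i₀) + gaussVal v h ∧
        (IsGoodPSD v h q ρ ↔ IsGoodPSD v (hs i₀) (qs i₀) (ρs i₀)) := by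
  classical
  rintro h q ρ rfl rfl rfl
  have hd : IsPSD (∏ i, hs i) (∏ i, qs i) (∏ i, hs i - (∏ i, qs i) ^ 2) :=
    .prod (fun i _ => hne i) (fun i _ j _ => hoddone i j) fun i _ => hdec i
  obtain ⟨i, -, hi⟩ := exists_gaussVal_add_le_prod v Finset.univ_nonempty
    (fun i _ => hne i) (fun i _ => hdec i) fun i _ => htnn i
  refine ⟨hd, ⟨i, hi⟩, fun i₀ hmin => ?_⟩
  rcases subsingleton_or_nontrivial ι with _ | _
  · simp [Fintype.prod_subsingleton _ i₀, ← (hdec i₀).eq_sub]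
  obtain ⟨j, hj⟩ := exists_ne i₀
  have hρ_ne : gaussVal v (ρs i₀) ≠ ⊤ := (WithTop.add_ne_top.mp (hmin j hj).ne_top).1
  have hlt := gaussVal_add_lt_prod v (s := Finset.univ.erase i₀) (hne i₀) (htnn i₀) hρ_ne
    (fun i _ => hne i) (fun i _ => hdec i) fun i hi => hmin i (Finset.ne_of_mem_erase hi)
  have hrest_ne : ∏ i ∈ Finset.univ.erase i₀, hs i ≠ 0 :=
    Finset.prod_ne_zero_iff.mpr fun i _ => hne i
  rw [← Finset.mul_prod_erase _ hs (Finset.mem_univ i₀),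
    ← Finset.mul_prod_erase _ qs (Finset.mem_univ i₀)] at hd ⊢
  refine ⟨?_, isGoodPSD_mul_iff v hsq hrest_ne (hdec i₀) (htnn i₀) hd hlt⟩
  rw [gaussVal_mul_sub_mul_sq v (hdec i₀) (htnn i₀) hlt, gaussVal_mul, add_assoc,
    add_comm (gaussVal v (hs i₀))]

/-- Products of part-square decompositions: with `h := ∏ hᵢ`,
`q := ∏ qᵢ` and `ρ := h − q²`, where the `hᵢ` are nonzero, at most one has odd degree,
and each decomposition `hᵢ = qᵢ² + ρᵢ` has `tᵢ := v ρᵢ − v hᵢ ≥ 0`, the pair `(q, ρ)` is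
a part-square decomposition of `h` with (a) `t := v ρ − v h ≥ min tᵢ`, and (b) if the
minimum is attained at a unique index `i₀`, then `t = t_{i₀}` and the decomposition of
`h` is good iff that of `h_{i₀}` is (differences of valuations are encoded by
cross-addition). -/
theorem stmt4 {Kbar : Type*} [Field Kbar] [IsAlgClosed Kbar]
    (v : AddValuation Kbar (WithTop ℚ)) (hchar : (2 : Kbar) ≠ 0)
    (hres : ResidueAlgClosed v)
    (N : ℕ) (hN : 0 < N) (hs qs ρs : Fin N → Kbar[X])
    (hne : ∀ i, hs i ≠ 0)
    (hoddone : ∀ i j, Odd (hs i).natDegree → Odd (hs j).natDegree → i = j)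
    (hdec : ∀ i, IsPSD (hs i) (qs i) (ρs i))
    (htnn : ∀ i, gaussVal v (hs i) ≤ gaussVal v (ρs i)) :
    ∀ h q ρ : Kbar[X], h = ∏ i, hs i → q = ∏ i, qs i → ρ = h - q ^ 2 →
      IsPSD h q ρ ∧
      (∃ i, gaussVal v (ρs i) + gaussVal v h ≤ gaussVal v ρ + gaussVal v (hs i)) ∧
      ∀ i₀ : Fin N,
        (∀ i, i ≠ i₀ →
          gaussVal v (ρs i₀) + gaussVal v (hs i) <
            gaussVal v (ρs i) + gaussVal v (hs i₀)) →
        gaussVal v ρ + gaussVal v (hs i₀) = gaussVal v (ρs i₀) + gaussVal v h ∧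
        (IsGoodPSD v h q ρ ↔ IsGoodPSD v (hs i₀) (qs i₀) (ρs i₀)) := by
  have : Nonempty (Fin N) := ⟨⟨0, hN⟩⟩
  exact stmt4_general (fun _ => IsAlgClosed.exists_eq_mul_self _) v hs qs ρs hne hoddone hdec htnn
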